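/- For every nonzero real k and every M ∈ ℝ^N, the matrix identity 𝔸(k, M) · 𝔹 · 𝔸(k, M)ᵀ = 𝕊 holds, where 𝕊 := [[0, −1, 0],[−1, 0, 0],[0, 0, B]]. -/

import Mathlib

open Matrix

noncomputable section

/-- Index type for `(N+2) × (N+2)` matrices in `1 + 1 + N` block form. -/
abbrev Idx (N : ℕ) : Type := Fin 1 ⊕ Fin 1 ⊕ Fin N

/-- The impulse `Q(M) = (1/2) M · B⁻¹ M`. -/
def Qimp (N : ℕ) (B : Matrix (Fin N) (Fin N) ℝ) (M : Fin N → ℝ) : ℝ :=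
  (1/2) * (M ⬝ᵥ B⁻¹.mulVec M)

/-- The matrix `𝔹 = [[0,1,0],[1,0,0],[0,0,B]]` in `1+1+N` block form. -/
def BBmat (N : ℕ) (B : Matrix (Fin N) (Fin N) ℝ) : Matrix (Idx N) (Idx N) ℝ :=
  Matrix.of fun i j =>
    match i, j with
    | Sum.inl _, Sum.inr (Sum.inl _) => 1
    | Sum.inr (Sum.inl _), Sum.inl _ => 1
    | Sum.inr (Sum.inr a), Sum.inr (Sum.inr b) => B a b
    | _, _ => 0

/-- The matrix `𝔸(k,M) = [[−1/k,0,0],[−Q(M)/k, k, (B⁻¹M)ᵀ],[−M/k, 0, I_N]]`. -/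
def AAmat (N : ℕ) (B : Matrix (Fin N) (Fin N) ℝ) (k : ℝ) (M : Fin N → ℝ) :
    Matrix (Idx N) (Idx N) ℝ :=
  Matrix.of fun i j =>
    match i, j with
    | Sum.inl _, Sum.inl _ => -(1/k)
    | Sum.inl _, _ => 0
    | Sum.inr (Sum.inl _), Sum.inl _ => -(Qimp N B M / k)
    | Sum.inr (Sum.inl _), Sum.inr (Sum.inl _) => k
    | Sum.inr (Sum.inl _), Sum.inr (Sum.inr j') => B⁻¹.mulVec M j'
    | Sum.inr (Sum.inr i'), Sum.inl _ => -(M i' / k)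
    | Sum.inr (Sum.inr _), Sum.inr (Sum.inl _) => 0
    | Sum.inr (Sum.inr i'), Sum.inr (Sum.inr j') => if i' = j' then 1 else 0

/-- The matrix `𝕊 = [[0,−1,0],[−1,0,0],[0,0,B]]` in `1+1+N` block form. -/
def SSmat (N : ℕ) (B : Matrix (Fin N) (Fin N) ℝ) : Matrix (Idx N) (Idx N) ℝ :=
  Matrix.of fun i j =>
    match i, j with
    | Sum.inl _, Sum.inr (Sum.inl _) => -1
    | Sum.inr (Sum.inl _), Sum.inl _ => -1
    | Sum.inr (Sum.inr a), Sum.inr (Sum.inr b) => B a b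
    | _, _ => 0

end

/-! The matrix `𝔸` factors as `U * D`, with `D = diag(-1/k, k, 1)` and `U` unipotent. The congruence
by `D` multiplies the hyperbolic plane inside `𝔹` by `-1/k * k = -1`, which turns `𝔹` into `𝕊`.
Since `B(B⁻¹M) = M` and `B⁻¹M · M = 2Q(M)`, the matrix `U` is an Eichler transvection of `𝕊` along
`B⁻¹M`, hence an isometry of `𝕊`. -/

section General

variable {R n : Type*} [CommRing R]

/-- The Gram matrix `[[0,a,0],[a,0,0],[0,0,B]]` of the orthogonal sum of a hyperbolic plane scaled
by `a` and the form `B`; both `𝔹` (`a = 1`) and `𝕊` (`a = -1`) are of this shape. -/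
def hyperbolicSum (a : R) (B : Matrix n n R) : Matrix (Fin 1 ⊕ Fin 1 ⊕ n) (Fin 1 ⊕ Fin 1 ⊕ n) R :=
  fromBlocks 0 (fromCols !![a] 0) (fromRows !![a] 0) (fromBlocks 0 0 0 B)

/-- The matrix `𝔸 = [[−1/k,0,0],[−q/k,k,wᵀ],[−m/k,0,1]]`, for a unit `k` of a commutative ring and
with `q` and `w` in the place of `Q(M)` and `B⁻¹M`. -/
def charMatrix [DecidableEq n] (k : Rˣ) (q : R) (m w : n → R) :
    Matrix (Fin 1 ⊕ Fin 1 ⊕ n) (Fin 1 ⊕ Fin 1 ⊕ n) R :=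
  fromBlocks !![-↑k⁻¹] 0
    (fromRows !![-(q * ↑k⁻¹)] (replicateCol (Fin 1) fun i => -(m i * ↑k⁻¹)))
    (fromBlocks !![↑k] (replicateRow (Fin 1) w) 0 1)

/-- The unipotent matrix `[[1,0,0],[q,1,wᵀ],[m,0,1]]`. For symmetric `B` it is an Eichler
transvection of `hyperbolicSum a B` when `a m = -B w` and `2 a q = -w · B w`; `m` and `q` are kept
as independent parameters because `w` does not determine them unless `2 a` is invertible. -/
def eichlerMatrix [DecidableEq n] (q : R) (m w : n → R) :
    Matrix (Fin 1 ⊕ Fin 1 ⊕ n) (Fin 1 ⊕ Fin 1 ⊕ n) R :=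
  fromBlocks !![1] 0 (fromRows !![q] (replicateCol (Fin 1) m))
    (fromBlocks !![1] (replicateRow (Fin 1) w) 0 1)

/-- The matrix `diag(s, t, 1)`, which scales the two isotropic axes of the hyperbolic plane in
`hyperbolicSum a B`. -/
def planeScaling [DecidableEq n] (s t : R) :
    Matrix (Fin 1 ⊕ Fin 1 ⊕ n) (Fin 1 ⊕ Fin 1 ⊕ n) R :=
  diagonal (Sum.elim (fun _ => s) (Sum.elim (fun _ => t) 1))

variable [Fintype n] [DecidableEq n]

theorem mulVec_nonsing_inv_mulVec {B : Matrix n n R} (hB : IsUnit B.det) (v : n → R) :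
    B *ᵥ B⁻¹ *ᵥ v = v := by
  rw [mulVec_mulVec, mul_nonsing_inv B hB, one_mulVec]

theorem planeScaling_mul_hyperbolicSum_mul_transpose (s t a : R) (B : Matrix n n R) :
    planeScaling s t * hyperbolicSum a B * (planeScaling s t)ᵀ = hyperbolicSum (s * t * a) B := by
  ext (i | i | i) (j | j | j) <;>
    simp [planeScaling, hyperbolicSum, diagonal_mul, mul_diagonal] <;> ring

theorem eichlerMatrix_mul_hyperbolicSum (a q : R) (B : Matrix n n R) (m w : n → R) :
    eichlerMatrix q m w * hyperbolicSum a B =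
      fromBlocks 0 (fromCols !![a] 0) (fromRows !![a] 0)
        (fromBlocks !![a * q] (replicateRow (Fin 1) (w ᵥ* B))
          (replicateCol (Fin 1) (a • m)) B) := by
  ext (i | i | i) (j | j | j) <;>
    simp [eichlerMatrix, hyperbolicSum, mul_apply, one_apply, vecMul, dotProduct, mul_comm]

theorem eichlerMatrix_mul_hyperbolicSum_mul_transpose (a q : R) (B : Matrix n n R) (m w : n → R) :
    eichlerMatrix q m w * hyperbolicSum a B * (eichlerMatrix q m w)ᵀ =
      fromBlocks 0 (fromCols !![a] 0) (fromRows !![a] 0)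
        (fromBlocks !![2 * a * q + w ⬝ᵥ B *ᵥ w] (replicateRow (Fin 1) (a • m + w ᵥ* B))
          (replicateCol (Fin 1) (a • m + B *ᵥ w)) B) := by
  rw [eichlerMatrix_mul_hyperbolicSum, dotProduct_mulVec]
  ext (i | i | i) (j | j | j) <;>
    simp [eichlerMatrix, mul_apply, one_apply, mulVec, dotProduct, mul_comm]
  ring

theorem eichlerMatrix_mul_hyperbolicSum_mul_transpose_eq_self {a q : R} {B : Matrix n n R}
    {m w : n → R} (hB : B.IsSymm) (hw : a • m + B *ᵥ w = 0) (hq : 2 * a * q + w ⬝ᵥ B *ᵥ w = 0) :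
    eichlerMatrix q m w * hyperbolicSum a B * (eichlerMatrix q m w)ᵀ = hyperbolicSum a B := by
  have hw' : a • m + w ᵥ* B = 0 := by rw [← mulVec_transpose, hB.eq, hw]
  have corner : !![(0 : R)] = 0 := by ext; simp
  rw [eichlerMatrix_mul_hyperbolicSum_mul_transpose, hw, hw', hq, corner, replicateRow_zero,
    replicateCol_zero, hyperbolicSum]

theorem charMatrix_eq_eichlerMatrix_mul_planeScaling (k : Rˣ) (q : R) (m w : n → R) :
    charMatrix k q m w = eichlerMatrix q m w * planeScaling (-(↑k⁻¹ : R)) (k : R) := by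
  ext (i | i | i) (j | j | j) <;>
    simp [charMatrix, eichlerMatrix, planeScaling, mul_diagonal]

theorem stmt10_general {B : Matrix n n R} (hB : B.IsSymm) (k : Rˣ) {q : R} {m w : n → R}
    (hw : B *ᵥ w = m) (hq : w ⬝ᵥ m = 2 * q) :
    charMatrix k q m w * hyperbolicSum 1 B * (charMatrix k q m w)ᵀ = hyperbolicSum (-1) B := by
  set U := eichlerMatrix q m w
  set D : Matrix (Fin 1 ⊕ Fin 1 ⊕ n) (Fin 1 ⊕ Fin 1 ⊕ n) R := planeScaling (-(↑k⁻¹ : R)) (k : R)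
  calc
    charMatrix k q m w * hyperbolicSum 1 B * (charMatrix k q m w)ᵀ
        = U * (D * hyperbolicSum 1 B * Dᵀ) * Uᵀ := by
      simp only [charMatrix_eq_eichlerMatrix_mul_planeScaling, transpose_mul, Matrix.mul_assoc,
        U, D]
    _ = U * hyperbolicSum (-1) B * Uᵀ := by
      simp [D, planeScaling_mul_hyperbolicSum_mul_transpose]
    _ = hyperbolicSum (-1) B :=
      eichlerMatrix_mul_hyperbolicSum_mul_transpose_eq_self hB (by simp [hw]) (by simp [hw, hq])

end General

theorem BBmat_eq_hyperbolicSum (N : ℕ) (B : Matrix (Fin N) (Fin N) ℝ) :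
    BBmat N B = hyperbolicSum 1 B := by
  ext (i | i | i) (j | j | j) <;> simp [BBmat, hyperbolicSum]

theorem SSmat_eq_hyperbolicSum (N : ℕ) (B : Matrix (Fin N) (Fin N) ℝ) :
    SSmat N B = hyperbolicSum (-1) B := by
  ext (i | i | i) (j | j | j) <;> simp [SSmat, hyperbolicSum]

theorem AAmat_eq_charMatrix (N : ℕ) (B : Matrix (Fin N) (Fin N) ℝ) (k : ℝˣ) (M : Fin N → ℝ) :
    AAmat N B k M = charMatrix k (Qimp N B M) M (B⁻¹ *ᵥ M) := by
  ext (i | i | i) (j | j | j) <;> simp [AAmat, charMatrix, one_apply, div_eq_mul_inv]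

theorem inv_mulVec_dotProduct_eq_two_mul_Qimp (N : ℕ) (B : Matrix (Fin N) (Fin N) ℝ)
    (M : Fin N → ℝ) : (B⁻¹ *ᵥ M) ⬝ᵥ M = 2 * Qimp N B M := by
  rw [dotProduct_comm, Qimp]
  ring

/-- for every `k ≠ 0` and every `M ∈ ℝ^N`, the matrix identity
`𝔸(k,M) 𝔹 𝔸(k,M)ᵀ = 𝕊` holds (Remark 10 of the paper). -/
theorem stmt10 (N : ℕ) (hN : 1 ≤ N) (B : Matrix (Fin N) (Fin N) ℝ)
    (hBsymm : B.IsSymm) (hBinv : IsUnit B.det) :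
    ∀ k : ℝ, k ≠ 0 → ∀ M : Fin N → ℝ,
      AAmat N B k M * BBmat N B * (AAmat N B k M)ᵀ = SSmat N B := by
  intro k hk M
  lift k to ℝˣ using hk.isUnit
  rw [AAmat_eq_charMatrix, BBmat_eq_hyperbolicSum, SSmat_eq_hyperbolicSum]
  exact stmt10_general hBsymm k (mulVec_nonsing_inv_mulVec hBinv M)
    (inv_mulVec_dotProduct_eq_two_mul_Qimp N B M)
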